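/- Let d ≥ 2 and λ ∈ [0,1). With W(x) = F(x) − F(T x) for x ∈ Δ, one has W(x) → ∞ as x → 0 within Δ: for every M > 0 there exists δ > 0 such that W(x) ≥ M for every x ∈ Δ with ‖x‖ ≤ δ. -/

import Mathlib

noncomputable section

open Metric Set Filter

/-- Euclidean space `ℝ^d` with `d = d' + 2 ≥ 2`. -/
abbrev Euc (d : ℕ) := EuclideanSpace ℝ (Fin (d + 2))

/-- The standard basis vectors. -/
def e (d : ℕ) (j : Fin (d + 2)) : Euc d := EuclideanSpace.single j 1

/-- The Douglas–Rachford operator for the unit sphere and the line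
`L_λ = {t e₁ + λ e₂}`, given by its explicit formula
`T x = (x₁/‖x‖) e₁ + ((1 − 1/‖x‖) x₂ + λ) e₂ + (1 − 1/‖x‖) ∑_{j=3}^d x_j e_j`. -/
def DR (d : ℕ) (lam : ℝ) (x : Euc d) : Euc d :=
  (x 0 / ‖x‖) • e d 0 + ((1 - 1 / ‖x‖) * x 1 + lam) • e d 1 +
    ∑ j ∈ Finset.univ.filter (fun j : Fin (d + 2) => 2 ≤ (j : ℕ)),
      ((1 - 1 / ‖x‖) * x j) • e d j

/-- The Lyapunov-type function of Benoist:
`F(x) = ½‖x − λe₂‖² − λ log(1 + √(1 − x₁²)) + λ√(1 − x₁²) + (λ−1) log x₁`. -/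
def F (d : ℕ) (lam : ℝ) (x : Euc d) : ℝ :=
  (1 / 2) * ‖x - lam • e d 1‖ ^ 2 - lam * Real.log (1 + Real.sqrt (1 - (x 0) ^ 2)) +
    lam * Real.sqrt (1 - (x 0) ^ 2) + (lam - 1) * Real.log (x 0)

/-- `Δ = {x : 0 < x₁ ≤ 1}`. -/
def Delta (d : ℕ) : Set (Euc d) := {x | 0 < x 0 ∧ x 0 ≤ 1}

/-- `W(x) = F(x) − F(T x)`. -/
def W (d : ℕ) (lam : ℝ) (x : Euc d) : ℝ := F d lam x - F d lam (DR d lam x)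

theorem DR_aux (d : ℕ) (lam : ℝ) (x : Euc d) :
    DR d lam x - lam • e d 1 = (1 - 1 / ‖x‖) • x + (x 0 * (2 / ‖x‖ - 1)) • e d 0 := by
  ext i
  by_cases hi : 2 ≤ (i : ℕ)
  · have a0 : i ≠ 0 := by rintro rfl; simp at hi
    have a1 : i ≠ 1 := by rintro rfl; simp at hi
    simp [DR, e, Pi.single_apply, a0, a1, Finset.sum_ite_eq, hi]
  · have : i = 0 ∨ i = 1 := by
      rcases i with ⟨i, h⟩
      simp only [Fin.ext_iff] at *
      simp at *
      omega
    rcases this with rfl | rfl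
    · simp [DR, e, Pi.single_apply, Finset.sum_ite_eq]
      ring
    · simp [DR, e, Pi.single_apply, Finset.sum_ite_eq]

theorem DR_zero (d : ℕ) (lam : ℝ) (x : Euc d) : DR d lam x 0 = x 0 / ‖x‖ := by
  simp [DR, e, Pi.single_apply, Finset.sum_ite_eq]

theorem aux_bd (lam t : ℝ) (h0 : 0 ≤ lam) (h1 : lam < 1) :
    |lam * Real.sqrt (1 - t ^ 2) - lam * Real.log (1 + Real.sqrt (1 - t ^ 2))| ≤ 1 := by
  have hs0 : 0 ≤ Real.sqrt (1 - t ^ 2) := Real.sqrt_nonneg _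
  have hs1 : Real.sqrt (1 - t ^ 2) ≤ 1 := by
    rw [Real.sqrt_le_left (by norm_num)]; nlinarith [sq_nonneg t]
  generalize Real.sqrt (1 - t ^ 2) = s at *
  have l0 : 0 ≤ Real.log (1 + s) := Real.log_nonneg (by linarith)
  have l1 : Real.log (1 + s) ≤ s := by
    have := Real.log_le_sub_one_of_pos (show 0 < 1 + s by linarith)
    linarith
  rw [abs_le]
  constructor <;> nlinarith

/-- For `λ ∈ [0,1)`, `W(x) → ∞` as `x → 0` within `Δ`: for every `M > 0`
there is `δ > 0` such that `W(x) ≥ M` for every `x ∈ Δ` with `‖x‖ ≤ δ`. -/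
theorem stmt8 (d : ℕ) (lam : ℝ) (h0 : 0 ≤ lam) (h1 : lam < 1) :
    ∀ M : ℝ, 0 < M → ∃ δ : ℝ, 0 < δ ∧
      ∀ x ∈ Delta d, ‖x‖ ≤ δ → M ≤ W d lam x := by
  intro M hM
  have hl : 0 < 1 - lam := by linarith
  refine ⟨Real.exp (-((M + 7) / (1 - lam))), Real.exp_pos _, ?_⟩
  rintro x ⟨hx0, hx1⟩ hx
  have hxr : x 0 ≤ ‖x‖ := (le_abs_self _).trans (by simpa using PiLp.norm_apply_le x 0)
  have hr : 0 < ‖x‖ := lt_of_lt_of_le hx0 hxr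
  have hlog : Real.log ‖x‖ ≤ -((M + 7) / (1 - lam)) := by
    have := Real.log_le_log hr hx
    rwa [Real.log_exp] at this
  have hr1 : ‖x‖ ≤ 1 := hx.trans (Real.exp_le_one_iff.2 (by
    have : 0 ≤ (M + 7) / (1 - lam) := by positivity
    linarith))
  have key : M + 7 ≤ (lam - 1) * Real.log ‖x‖ := by
    have : (M + 7) / (1 - lam) ≤ - Real.log ‖x‖ := by linarith
    rw [div_le_iff₀ hl] at this
    linarith
  have hn : ‖DR d lam x - lam • e d 1‖ ≤ 3 := by
    rw [DR_aux]
    refine (norm_add_le _ _).trans ?_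
    have he : ‖e d 0‖ = 1 := by simp [e]
    rw [norm_smul, norm_smul, he, Real.norm_eq_abs, Real.norm_eq_abs]
    have i1 : 1 ≤ 1 / ‖x‖ := by rw [le_div_iff₀ hr]; linarith
    have i2 : 0 ≤ 2 / ‖x‖ - 1 := by
      have : 2 / ‖x‖ = 2 * (1 / ‖x‖) := by ring
      linarith
    rw [abs_of_nonpos (by linarith), abs_of_nonneg (by positivity)]
    have i3 : x 0 * (2 / ‖x‖ - 1) ≤ ‖x‖ * (2 / ‖x‖ - 1) := by gcongr
    have i4 : ‖x‖ * (2 / ‖x‖ - 1) = 2 - ‖x‖ := by field_simp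
    have i5 : -(1 - 1 / ‖x‖) * ‖x‖ = 1 - ‖x‖ := by field_simp; ring
    linarith
  have hn2 : ‖DR d lam x - lam • e d 1‖ ^ 2 ≤ 9 := by
    nlinarith [norm_nonneg (DR d lam x - lam • e d 1)]
  have b1 := abs_le.1 (aux_bd lam (x 0) h0 h1)
  have b2 := abs_le.1 (aux_bd lam (x 0 / ‖x‖) h0 h1)
  have hp := sq_nonneg ‖x - lam • e d 1‖
  unfold W F
  rw [DR_zero]
  have hd : (lam - 1) * Real.log (x 0 / ‖x‖)
      = (lam - 1) * Real.log (x 0) - (lam - 1) * Real.log ‖x‖ := by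
    rw [Real.log_div hx0.ne' hr.ne']; ring
  rw [hd]
  linarith [b1.1, b2.2]
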